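/- Explicit energy bound for the recovery sequence of the constant function under the exact volume constraint: Let L > 0, σ ∈ (0,1), and let (k_n) be integers with 0 ≤ k_n ≤ ⌊Ln²⌋ and k_n/(Ln²) → σ. Then there exists N such that for every n ≥ N there is u_n ∈ A_n(L,k_n) with F_n^L(u_n) ≤ (2·⌊Ln⌋ + 3)/n. -/

import Mathlib

open MeasureTheory Filter Set
open scoped Classical

noncomputable section

/-- `AdmDisc L n k u` : `u` belongs to `A_n(L,k)`, i.e. `u` takes the values `0,1` on
`{1,…,⌊Ln²⌋}` and exactly `k` of those indices carry the value `1`. -/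
def AdmDisc (L : ℝ) (n k : ℕ) (u : ℕ → ℝ) : Prop :=
  (∀ i ∈ Finset.Icc 1 (Nat.floor (L * (n : ℝ) ^ 2)), u i = 0 ∨ u i = 1) ∧
  ((Finset.Icc 1 (Nat.floor (L * (n : ℝ) ^ 2))).filter fun i => u i = 1).card = k

/-- The discrete energy `F_n^L(u) = (1/n)·Σ (u_i − u_j)²`, the sum running over the
(unordered) pairs `{i,j} ⊆ {1,…,⌊Ln²⌋}` with `|i−j| = 1` or `|i−j| = n`. -/
def energyL (L : ℝ) (n : ℕ) (u : ℕ → ℝ) : ℝ :=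
  (1 / (n : ℝ)) *
    ∑ p ∈ (Finset.Icc 1 (Nat.floor (L * (n : ℝ) ^ 2)) ×ˢ
        Finset.Icc 1 (Nat.floor (L * (n : ℝ) ^ 2))).filter
        (fun p => p.1 < p.2 ∧ (p.2 - p.1 = 1 ∨ p.2 - p.1 = n)),
      (u p.1 - u p.2) ^ 2

/-! Arrange `1, …, M` in rows of length `n` and fill the cells column by column until `k` of them
are filled. Filling in the lexicographic order of (column, row) makes the filled cells those below a
threshold `b`. The pairs `{i, i + 1}` inside a row increase in this order, so each of the at most
`M / n + 1` rows crosses `b` at most once. The cell `i + n` is the immediate successor of `i` among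
all (column, row) positions, so only one vertical pair crosses `b`. The remaining pairs `{i, i + 1}`
wrap around the end of a row, and there are at most `M / n` of them. -/

open scoped Finset

theorem exists_card_filter_lt_eq {α β : Type*} [LinearOrder β] [NoMaxOrder β] [Nonempty β]
    {s : Finset α} {f : α → β} (hf : InjOn f s) {k : ℕ} (hk : k ≤ #s) :
    ∃ b, #{a ∈ s | f a < b} = k := by
  obtain rfl | hk := hk.eq_or_lt
  · obtain ⟨m, hm⟩ := (s.image f).exists_le
    obtain ⟨b, hb⟩ := exists_gt m
    refine ⟨b, congrArg Finset.card (Finset.filter_true_of_mem fun a ha ↦ ?_)⟩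
    exact (hm _ (Finset.mem_image_of_mem f ha)).trans_lt hb
  let rank : α → ℕ := fun a ↦ #{x ∈ s | f x < f a}
  have rank_lt_rank {a b : α} (ha : a ∈ s) (hab : f a < f b) : rank a < rank b := by
    refine Finset.card_lt_card (Finset.ssubset_iff_of_subset ?_ |>.2 ⟨a, ?_⟩)
    · exact Finset.monotone_filter_right s fun x _ hx ↦ hx.trans hab
    · simp [ha, hab]
  have rank_injOn : InjOn rank s := fun a ha b hb hab ↦ by
    by_contra hne
    rcases (hf.ne ha hb hne).lt_or_gt with h | h
    · exact (rank_lt_rank ha h).ne hab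
    · exact (rank_lt_rank hb h).ne' hab
  have rank_mapsTo : MapsTo rank s (Finset.range #s) := fun a ha ↦ by
    rw [Finset.coe_range, mem_Iio]
    exact Finset.card_lt_card (Finset.filter_ssubset.2 ⟨a, ha, lt_irrefl _⟩)
  obtain ⟨a, -, ha⟩ := Finset.surjOn_of_injOn_of_card_le rank rank_mapsTo rank_injOn
    (Finset.card_range _).le (Finset.mem_coe.2 (Finset.mem_range.2 hk))
  exact ⟨f a, ha⟩

/-- The position (column, row) of the cell `i` when `1, 2, 3, …` are arranged in rows of length `n`.
Columns and rows are numbered from `0`, and the lexicographic order compares columns first. -/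
def columnKey (n i : ℕ) : ℕ ×ₗ ℕ := toLex ((i - 1) % n, (i - 1) / n)

theorem columnKey_injOn (n : ℕ) : InjOn (columnKey n) (Ici 1) := by
  intro i hi j hj hij
  obtain ⟨hmod, hdiv⟩ := Prod.mk.inj (toLex.injective hij)
  have hpred : i - 1 = j - 1 := by
    rw [← Nat.div_add_mod (i - 1) n, ← Nat.div_add_mod (j - 1) n, hmod, hdiv]
  exact Nat.pred_inj hi hj hpred

theorem columnKey_le_columnKey_of_row_eq {n i j : ℕ} (hrow : (i - 1) / n = (j - 1) / n)
    (hij : i ≤ j) : columnKey n i ≤ columnKey n j := by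
  have hmod : (i - 1) % n ≤ (j - 1) % n := by
    have hi := Nat.div_add_mod (i - 1) n
    have hj := Nat.div_add_mod (j - 1) n
    rw [hrow] at hi
    lia
  exact Prod.Lex.toLex_mono ⟨hmod, hrow.le⟩

theorem columnKey_covBy_add {n i : ℕ} (hn : 0 < n) (hi : 1 ≤ i) :
    columnKey n i ⋖ columnKey n (i + n) := by
  have hkey : columnKey n (i + n) = toLex ((i - 1) % n, (i - 1) / n + 1) := by
    rw [columnKey, Nat.sub_add_comm hi, Nat.add_mod_right, Nat.add_div_right _ hn]
  rw [hkey]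
  refine ⟨Prod.Lex.toLex_lt_toLex.2 (.inr ⟨rfl, Nat.lt_succ_self _⟩), fun b hib hbj ↦ ?_⟩
  simp only [columnKey, Prod.Lex.lt_iff, ofLex_toLex] at hib hbj
  lia

theorem row_succ_eq_of_not_dvd {n i : ℕ} (h : ¬ n ∣ i) : (i - 1) / n = (i + 1 - 1) / n := by
  obtain ⟨m, rfl⟩ : ∃ m, i = m + 1 := Nat.exists_eq_succ_of_ne_zero (by rintro rfl; simp at h)
  simp [Nat.succ_div_of_not_dvd h]

theorem card_row_crossings_le (n M : ℕ) (b : ℕ ×ₗ ℕ) :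
    #{i ∈ Finset.Icc 1 M | ¬ n ∣ i ∧ columnKey n i < b ∧ b ≤ columnKey n (i + 1)} ≤
      M / n + 1 := by
  rw [← Finset.card_range (M / n + 1)]
  refine Finset.card_le_card_of_injOn (fun i ↦ (i - 1) / n) (fun i hi ↦ ?_) ?_
  · simp only [Finset.coe_filter, Finset.mem_Icc, mem_ofPred_eq] at hi
    simpa [Nat.lt_succ_iff] using Nat.div_le_div_right (c := n) (by lia : i - 1 ≤ M)
  have not_lt_of_crossing {i j : ℕ} (hi : ¬ n ∣ i) (hbi : b ≤ columnKey n (i + 1))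
      (hjb : columnKey n j < b) (hrow : (i - 1) / n = (j - 1) / n) : ¬ i < j := fun hij ↦
    (hbi.trans (columnKey_le_columnKey_of_row_eq
      ((row_succ_eq_of_not_dvd hi).symm.trans hrow) hij)).not_gt hjb
  intro i hi j hj hrow
  simp only [Finset.coe_filter, mem_ofPred_eq] at hi hj
  obtain ⟨-, hni, hib, hbi⟩ := hi
  obtain ⟨-, hnj, hjb, hbj⟩ := hj
  exact le_antisymm (not_lt.1 (not_lt_of_crossing hnj hbj hib hrow.symm))
    (not_lt.1 (not_lt_of_crossing hni hbi hjb hrow))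

theorem card_column_crossings_le_one {n : ℕ} (hn : 0 < n) (M : ℕ) (b : ℕ ×ₗ ℕ) :
    #{i ∈ Finset.Icc 1 M | columnKey n i < b ∧ b ≤ columnKey n (i + n)} ≤ 1 := by
  have eq_of_crossing {i : ℕ} (hi : 1 ≤ i) (hib : columnKey n i < b)
      (hbi : b ≤ columnKey n (i + n)) : columnKey n (i + n) = b :=
    (hbi.eq_of_not_lt ((columnKey_covBy_add hn hi).2 hib)).symm
  refine Finset.card_le_one.2 fun i hi j hj ↦ ?_
  simp only [Finset.mem_filter, Finset.mem_Icc] at hi hj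
  obtain ⟨⟨hi, -⟩, hib, hbi⟩ := hi
  obtain ⟨⟨hj, -⟩, hjb, hbj⟩ := hj
  have hkey := (eq_of_crossing hi hib hbi).trans (eq_of_crossing hj hjb hbj).symm
  exact Nat.add_right_cancel
    (columnKey_injOn n (hi.trans (Nat.le_add_right i n)) (hj.trans (Nat.le_add_right j n)) hkey)

/-- The interacting pairs of cells in `{1, …, M}` that are separated by `A`. Each unordered pair is
represented by `(i, j)` with `i < j`, as in `energyL`. -/
def cutEdges (n M : ℕ) (A : Set ℕ) : Finset (ℕ × ℕ) :=
  {p ∈ (Finset.Icc 1 M ×ˢ Finset.Icc 1 M).filter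
      (fun p => p.1 < p.2 ∧ (p.2 - p.1 = 1 ∨ p.2 - p.1 = n)) | ¬ (p.1 ∈ A ↔ p.2 ∈ A)}

theorem cutEdges_columnKey_lt_subset {n : ℕ} (hn : 0 < n) (M : ℕ) (b : ℕ ×ₗ ℕ) :
    cutEdges n M {i | columnKey n i < b} ⊆
      ({i ∈ Finset.Ioc 0 M | n ∣ i}.image fun i ↦ (i, i + 1)) ∪
      ({i ∈ Finset.Icc 1 M | ¬ n ∣ i ∧ columnKey n i < b ∧ b ≤ columnKey n (i + 1)}.image
        fun i ↦ (i, i + 1)) ∪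
      ({i ∈ Finset.Icc 1 M | columnKey n i < b ∧ b ≤ columnKey n (i + n)}.image
        fun i ↦ (i, i + n)) := by
  have crosses_of_cut {x y : ℕ ×ₗ ℕ} (hxy : x ≤ y) (hcut : ¬ (x < b ↔ y < b)) :
      x < b ∧ b ≤ y := by
    have := hxy.trans_lt (c := b)
    rw [← not_lt]
    tauto
  rintro ⟨i, j⟩ hij
  simp only [cutEdges, Finset.mem_filter, Finset.mem_product, Finset.mem_Icc, mem_ofPred_eq] at hij
  obtain ⟨⟨⟨hi, -⟩, hlt, hdist⟩, hcut⟩ := hij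
  simp only [Finset.mem_union, Finset.mem_image, Finset.mem_filter, Finset.mem_Icc,
    Finset.mem_Ioc]
  rcases hdist with hdist | hdist
  · obtain rfl : j = i + 1 := by lia
    by_cases hni : n ∣ i
    · exact .inl (.inl ⟨i, ⟨hi, hni⟩, rfl⟩)
    · have hle := columnKey_le_columnKey_of_row_eq (row_succ_eq_of_not_dvd hni) (Nat.le_succ i)
      exact .inl (.inr ⟨i, ⟨hi, hni, crosses_of_cut hle hcut⟩, rfl⟩)
  · obtain rfl : j = i + n := by lia
    exact .inr ⟨i, ⟨hi, crosses_of_cut (columnKey_covBy_add hn hi.1).le hcut⟩, rfl⟩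

theorem card_cutEdges_columnKey_lt_le {n : ℕ} (hn : 0 < n) (M : ℕ) (b : ℕ ×ₗ ℕ) :
    #(cutEdges n M {i | columnKey n i < b}) ≤ 2 * (M / n) + 2 := by
  calc #(cutEdges n M {i | columnKey n i < b})
      ≤ #{i ∈ Finset.Ioc 0 M | n ∣ i} +
          #{i ∈ Finset.Icc 1 M | ¬ n ∣ i ∧ columnKey n i < b ∧ b ≤ columnKey n (i + 1)} +
          #{i ∈ Finset.Icc 1 M | columnKey n i < b ∧ b ≤ columnKey n (i + n)} := by
        refine (Finset.card_le_card (cutEdges_columnKey_lt_subset hn M b)).trans ?_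
        refine (Finset.card_union_le _ _).trans (add_le_add ?_ Finset.card_image_le)
        exact (Finset.card_union_le _ _).trans
          (add_le_add Finset.card_image_le Finset.card_image_le)
    _ ≤ M / n + (M / n + 1) + 1 := by
        gcongr
        · exact (Nat.Ioc_filter_dvd_card_eq_div M n).le
        · exact card_row_crossings_le n M b
        · exact card_column_crossings_le_one hn M b
    _ = 2 * (M / n) + 2 := by ring

theorem exists_card_eq_card_cutEdges_le {n M k : ℕ} (hn : 0 < n) (hk : k ≤ M) :
    ∃ A : Set ℕ, #{i ∈ Finset.Icc 1 M | i ∈ A} = k ∧ #(cutEdges n M A) ≤ 2 * (M / n) + 2 := by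
  have hinj : InjOn (columnKey n) (Finset.Icc 1 M) :=
    (columnKey_injOn n).mono fun i hi ↦ (Finset.mem_Icc.1 hi).1
  obtain ⟨b, hb⟩ := exists_card_filter_lt_eq hinj (k := k) (by simpa using hk)
  refine ⟨{i | columnKey n i < b}, ?_, card_cutEdges_columnKey_lt_le hn M b⟩
  simpa only [mem_ofPred_eq] using hb

theorem admDisc_indicator_one {L : ℝ} {n k : ℕ} {A : Set ℕ}
    (hA : #{i ∈ Finset.Icc 1 ⌊L * (n : ℝ) ^ 2⌋₊ | i ∈ A} = k) :
    AdmDisc L n k (A.indicator 1) := by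
  refine ⟨fun i _ ↦ indicator_eq_zero_or_self A 1 i, ?_⟩
  simpa only [indicator_eq_one_iff_mem] using hA

theorem energyL_indicator_one (L : ℝ) (n : ℕ) (A : Set ℕ) :
    energyL L n (A.indicator 1) = #(cutEdges n ⌊L * (n : ℝ) ^ 2⌋₊ A) / n := by
  rw [energyL, cutEdges, Finset.natCast_card_filter, one_div_mul_eq_div]
  congr 1
  refine Finset.sum_congr rfl fun p _ ↦ ?_
  by_cases h₁ : p.1 ∈ A <;> by_cases h₂ : p.2 ∈ A <;> simp [h₁, h₂]

theorem floor_mul_sq_div (L : ℝ) {n : ℕ} (hn : 0 < n) :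
    ⌊L * (n : ℝ) ^ 2⌋₊ / n = ⌊L * (n : ℝ)⌋₊ := by
  rw [← Nat.floor_div_natCast]
  congr 1
  field_simp

theorem recovery_energy_bound_general {L : ℝ} (_hL : 0 < L) {n : ℕ} (hn : 0 < n) {k : ℕ}
    (hk : k ≤ ⌊L * (n : ℝ) ^ 2⌋₊) :
    ∃ u : ℕ → ℝ, AdmDisc L n k u ∧ energyL L n u ≤ (2 * (⌊L * (n : ℝ)⌋₊ : ℝ) + 2) / n := by
  obtain ⟨A, hcard, hcut⟩ := exists_card_eq_card_cutEdges_le hn hk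
  refine ⟨A.indicator 1, admDisc_indicator_one hcard, ?_⟩
  rw [floor_mul_sq_div L hn] at hcut
  rw [energyL_indicator_one]
  gcongr
  exact_mod_cast hcut

/-- Explicit energy bound for the recovery sequence of the constant function under the
exact volume constraint: for `n` large there is `u_n ∈ A_n(L,k_n)` with
`F_n^L(u_n) ≤ (2⌊Ln⌋+3)/n`. -/
theorem recovery_energy_bound
    (L σ : ℝ) (hL : 0 < L) (hσ : σ ∈ Set.Ioo (0 : ℝ) 1)
    (k : ℕ → ℕ) (hk : ∀ n, k n ≤ Nat.floor (L * (n : ℝ) ^ 2))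
    (hklim : Tendsto (fun n => (k n : ℝ) / (L * (n : ℝ) ^ 2)) atTop (nhds σ)) :
    ∃ N : ℕ, ∀ n, N ≤ n → ∃ u : ℕ → ℝ, AdmDisc L n (k n) u ∧
      energyL L n u ≤ (2 * (Nat.floor (L * (n : ℝ)) : ℝ) + 3) / n := by
  refine ⟨1, fun n hn ↦ (recovery_energy_bound_general hL hn (hk n)).imp fun u hu ↦ ?_⟩
  exact ⟨hu.1, hu.2.trans (by gcongr; norm_num)⟩
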